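/- arXiv:2202.04061 — 2 statements merged into one kernel-verified Lean document; each statement's English description precedes it below -/
import Mathlib

section
/- (Properties of the off-diagonal block of Σ^{1/2}.) Let Σ be a p×p positive semidefinite matrix with eigenvalues λ_1 ≥ … ≥ λ_p ≥ 0 whose top k orthonormal eigenvectors are supported on an index set J of size s. Then the block (Σ^{1/2})_{JJ^c} of its positive semidefinite square root satisfies ‖(Σ^{1/2})_{JJ^c}‖ ≤ 2√λ_1, its transpose annihilates U_J, i.e. ((Σ^{1/2})_{JJ^c})ᵀ U_J = 0, it has rank at most s − k, and the column space of the right singular vectors of ((Σ^{1/2})_{JJ^c})ᵀ (equivalently, the left singular subspace of (Σ^{1/2})_{JJ^c}) is contained in the span of U_⊥, the orthogonal complement of U_J in ℝ^s. -/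
/-!
Write `R = Σ^{1/2}`. Uniqueness of the positive semidefinite square root turns the spectral
decomposition `Σ = V diag(λ) Vᴴ` into `R = V diag(√λ) Vᴴ`. Therefore `‖R‖ ≤ √λ₁`, a bound which
passes to every submatrix, and `R` scales each column of `V`. A column `u` supported on `J` thus has
`R u` supported on `J`; reading the rows of `R u` outside `J` gives `(R_{JJᶜ})ᴴ U_J = 0`.

As `[U_J, U_⊥]` is a square matrix with orthonormal columns, `U_J U_Jᴴ + U_⊥ U_⊥ᴴ = 1`. Hence
`R_{JJᶜ}` factors as `U_⊥ (U_⊥ᴴ R_{JJᶜ})`, which bounds its rank and its column space.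
-/

open MeasureTheory ProbabilityTheory Matrix

noncomputable section

/-- The ψ_α Orlicz norm of a real random variable (as defined in the paper). -/
def psiNorm {Ω : Type*} [MeasurableSpace Ω] (μ : Measure Ω) (α : ℝ) (X : Ω → ℝ) : ℝ :=
  sInf {t : ℝ | 0 < t ∧ ∫ ω, Real.exp (|X ω| ^ α / t) ∂μ ≤ 1}

/-- The `2→∞` norm of a matrix: the maximum Euclidean row norm. -/
def twoInf {m k : ℕ} (M : Matrix (Fin m) (Fin k) ℝ) : ℝ :=
  ⨆ i, Real.sqrt (∑ j, M i j ^ 2)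

/-- The ℓ₂ operator (spectral) norm of a matrix. -/
def specNorm {m k : ℕ} (M : Matrix (Fin m) (Fin k) ℝ) : ℝ :=
  ‖LinearMap.toContinuousLinearMap (Matrix.toEuclideanLin M)‖

/-- The Frobenius norm of a matrix. -/
def frobNorm {m k : ℕ} (M : Matrix (Fin m) (Fin k) ℝ) : ℝ :=
  Real.sqrt (∑ i, ∑ j, M i j ^ 2)

/-- The maximum-entry norm of a matrix. -/
def maxNorm {m k : ℕ} (M : Matrix (Fin m) (Fin k) ℝ) : ℝ :=
  ⨆ i, ⨆ j, |M i j|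

/-- The sample covariance matrix of `n` observations in `ℝ^p`. -/
def sampleCov {n p : ℕ} (X : Fin n → Fin p → ℝ) : Matrix (Fin p) (Fin p) ℝ :=
  (n : ℝ)⁻¹ • ∑ i, Matrix.vecMulVec (X i) (X i)

/-- `W` is a `d × k` matrix whose columns are orthonormal eigenvectors of the symmetric
matrix `M` corresponding to its `k` largest eigenvalues `lamW` (eigenvalues in
decreasing order): `W` consists of the first `k` columns of a full orthogonal
eigenbasis of `M` with decreasing eigenvalues. -/
def IsTopEig {d k : ℕ} (hk : k ≤ d) (M : Matrix (Fin d) (Fin d) ℝ)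
    (W : Matrix (Fin d) (Fin k) ℝ) (lamW : Fin k → ℝ) : Prop :=
  ∃ (V : Matrix (Fin d) (Fin d) ℝ) (ev : Fin d → ℝ),
    Vᵀ * V = 1 ∧ M = V * Matrix.diagonal ev * Vᵀ ∧ Antitone ev ∧
    (∀ i j, W i j = V i (Fin.castLE hk j)) ∧ ∀ j, lamW j = ev (Fin.castLE hk j)

section Algebra

variable {α k l m n o q r : Type*}

lemma submatrix_mul_submatrix_of_support [NonUnitalNonAssocSemiring α] [Fintype m] [Fintype n]
    (M : Matrix l n α) {N : Matrix n o α} (g : r → l) {f : m → n} (hf : Function.Injective f)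
    {e : k → o} (hN : ∀ i ∉ Set.range f, ∀ j, N i (e j) = 0) :
    M.submatrix g f * N.submatrix f e = (M * N).submatrix g e := by
  ext b j
  refine Fintype.sum_of_injective f hf _ (fun i => M (g b) i * N i (e j)) (fun i hi => ?_)
    fun _ => rfl
  rw [hN i hi j, mul_zero]

lemma conjTranspose_mul_self_submatrix_of_support [NonAssocSemiring α] [StarRing α]
    [Fintype m] [Fintype n] [DecidableEq k] [DecidableEq o] {V : Matrix n o α} (hV : Vᴴ * V = 1)
    {f : m → n} (hf : Function.Injective f) {e : k → o} (he : Function.Injective e)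
    (hsupp : ∀ i ∉ Set.range f, ∀ j, V i (e j) = 0) :
    (V.submatrix f e)ᴴ * V.submatrix f e = 1 := by
  rw [conjTranspose_submatrix, submatrix_mul_submatrix_of_support Vᴴ e hf hsupp, hV,
    submatrix_one e he]

lemma conjTranspose_submatrix_mul_submatrix_eq_zero [NonUnitalSemiring α] [StarRing α]
    [Fintype m] [Fintype n] [Fintype o] [DecidableEq o] {R : Matrix n n α} (hR : R.IsHermitian)
    {V : Matrix n o α} {d : o → α} (hRV : R * V = V * diagonal d)
    {f : m → n} (hf : Function.Injective f) {g : l → n} (hfg : Disjoint (Set.range f) (Set.range g))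
    {e : k → o} (hsupp : ∀ i ∉ Set.range f, ∀ j, V i (e j) = 0) :
    (R.submatrix f g)ᴴ * V.submatrix f e = 0 := by
  rw [conjTranspose_submatrix, hR.eq, submatrix_mul_submatrix_of_support R g hf hsupp, hRV]
  ext b j
  have hb : g b ∉ Set.range f := hfg.notMem_of_mem_right ⟨b, rfl⟩
  rw [submatrix_apply, mul_diagonal, hsupp _ hb, zero_mul, Matrix.zero_apply]

lemma mul_conjTranspose_add_mul_conjTranspose_eq_one
    [Ring α] [StarRing α] [IsStablyFiniteRing α]
    [Fintype m] [Fintype q] [Fintype k] [DecidableEq m] [DecidableEq q] [DecidableEq k]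
    (hcard : Fintype.card m = Fintype.card k + Fintype.card q)
    {A : Matrix m k α} {B : Matrix m q α} (hA : Aᴴ * A = 1) (hB : Bᴴ * B = 1) (hAB : Aᴴ * B = 0) :
    A * Aᴴ + B * Bᴴ = 1 := by
  have hBA : Bᴴ * A = 0 := by simpa using congrArg conjTranspose hAB
  have hleft : fromRows Aᴴ Bᴴ * fromCols A B = 1 := by
    rw [fromRows_mul_fromCols, hA, hB, hAB, hBA, fromBlocks_one]
  rw [← fromCols_mul_fromRows]
  exact (mul_eq_one_comm_of_card_eq _ _ _ (by rw [Fintype.card_sum, hcard])).mp hleft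

lemma eq_mul_conjTranspose_mul_of_conjTranspose_mul_eq_zero
    [Ring α] [StarRing α] [IsStablyFiniteRing α]
    [Fintype m] [Fintype q] [Fintype k] [DecidableEq q] [DecidableEq k]
    (hcard : Fintype.card m = Fintype.card k + Fintype.card q)
    {A : Matrix m k α} {B : Matrix m q α} (hA : Aᴴ * A = 1) (hB : Bᴴ * B = 1) (hAB : Aᴴ * B = 0)
    {M : Matrix m l α} (hM : Mᴴ * A = 0) :
    M = B * (Bᴴ * M) := by
  classical
  have hAM : Aᴴ * M = 0 := by simpa using congrArg conjTranspose hM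
  calc M = (A * Aᴴ + B * Bᴴ) * M := by
        rw [mul_conjTranspose_add_mul_conjTranspose_eq_one hcard hA hB hAB, Matrix.one_mul]
    _ = B * (Bᴴ * M) := by
        rw [Matrix.add_mul, Matrix.mul_assoc, hAM, Matrix.mul_zero, zero_add, Matrix.mul_assoc]

end Algebra

section SquareRoot

open scoped ComplexOrder Matrix.Norms.L2Operator

variable {𝕜 k l m n o q : Type*} [RCLike 𝕜] [Fintype n]

open scoped MatrixOrder in
lemma eq_of_mul_self_eq_mul_self_of_posSemidef {A B : Matrix n n 𝕜} (hA : A.PosSemidef)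
    (hB : B.PosSemidef) (h : A * A = B * B) : A = B := by
  classical
  exact (CFC.sqrt_mul_self A hA.nonneg).symm.trans (CFC.sqrt_unique h.symm hB.nonneg)

variable [DecidableEq n]

lemma eq_mul_diagonal_sqrt_mul_conjTranspose_of_posSemidef {R V : Matrix n n 𝕜}
    (hR : R.PosSemidef) (hV : Vᴴ * V = 1) {lam : n → ℝ} (hlam : ∀ i, 0 ≤ lam i)
    (hRR : R * R = V * diagonal (fun i => (lam i : 𝕜)) * Vᴴ) :
    R = V * diagonal (fun i => (√(lam i) : 𝕜)) * Vᴴ := by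
  set D : Matrix n n 𝕜 := diagonal fun i => (√(lam i) : 𝕜)
  have hD : D.PosSemidef :=
    .diagonal fun i => RCLike.ofReal_nonneg.mpr (Real.sqrt_nonneg (lam i))
  have hDD : D * D = diagonal fun i => (lam i : 𝕜) := by
    simp only [D, diagonal_mul_diagonal, ← RCLike.ofReal_mul, Real.mul_self_sqrt (hlam _)]
  refine eq_of_mul_self_eq_mul_self_of_posSemidef hR (hD.mul_mul_conjTranspose_same V) ?_
  calc R * R = V * (D * D) * Vᴴ := by rw [hRR, hDD]
    _ = V * D * (Vᴴ * V) * D * Vᴴ := by rw [hV, Matrix.mul_one, Matrix.mul_assoc V D D]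
    _ = V * D * Vᴴ * (V * D * Vᴴ) := by simp only [Matrix.mul_assoc]

lemma l2_opNorm_mul_mul_conjTranspose_of_conjTranspose_mul_self {V : Matrix n n 𝕜}
    (hV : Vᴴ * V = 1) (A : Matrix n n 𝕜) : ‖V * A * Vᴴ‖ = ‖A‖ := by
  have hVu : V ∈ unitary (Matrix n n 𝕜) := ⟨hV, mul_eq_one_comm.mp hV⟩
  rw [← star_eq_conjTranspose, CStarRing.norm_mul_mem_unitary _ (Unitary.star_mem hVu),
    CStarRing.norm_mem_unitary_mul _ hVu]

lemma l2_opNorm_le_sqrt_of_mul_self_eq {R V : Matrix n n 𝕜} (hR : R.PosSemidef)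
    (hV : Vᴴ * V = 1) {lam : n → ℝ} (hlam : ∀ i, 0 ≤ lam i)
    (hRR : R * R = V * diagonal (fun i => (lam i : 𝕜)) * Vᴴ) {c : ℝ} (hc : ∀ i, lam i ≤ c) :
    ‖R‖ ≤ √c := by
  rw [eq_mul_diagonal_sqrt_mul_conjTranspose_of_posSemidef hR hV hlam hRR,
    l2_opNorm_mul_mul_conjTranspose_of_conjTranspose_mul_self hV, l2_opNorm_diagonal]
  refine (pi_norm_le_iff_of_nonneg (Real.sqrt_nonneg c)).mpr fun i => ?_
  rw [RCLike.norm_ofReal, abs_of_nonneg (Real.sqrt_nonneg _)]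
  exact Real.sqrt_le_sqrt (hc i)

lemma l2_opNorm_le_one_of_conjTranspose_mul_self [Fintype m] {A : Matrix m n 𝕜}
    (hA : Aᴴ * A = 1) : ‖A‖ ≤ 1 := by
  have hone : ‖(1 : Matrix n n 𝕜)‖ ≤ 1 := by
    rw [← diagonal_one, l2_opNorm_diagonal]
    exact (pi_norm_const_le (1 : 𝕜)).trans_eq norm_one
  have hsq : ‖A‖ * ‖A‖ ≤ 1 := by rwa [← l2_opNorm_conjTranspose_mul_self, hA]
  exact (sq_le_one_iff₀ (norm_nonneg A)).mp (by rwa [sq])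

lemma l2_opNorm_one_submatrix_le_one [Fintype m] [DecidableEq m] {f : m → n}
    (hf : Function.Injective f) : ‖(1 : Matrix n n 𝕜).submatrix id f‖ ≤ 1 := by
  refine l2_opNorm_le_one_of_conjTranspose_mul_self ?_
  rw [conjTranspose_submatrix, conjTranspose_one,
    ← submatrix_mul _ _ _ _ _ Function.bijective_id, Matrix.one_mul, submatrix_one f hf]

lemma l2_opNorm_submatrix_le [Fintype l] [Fintype m] [Fintype o] [DecidableEq l]
    (M : Matrix o n 𝕜) {f : m → o} (hf : Function.Injective f) {g : l → n}
    (hg : Function.Injective g) : ‖M.submatrix f g‖ ≤ ‖M‖ := by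
  classical
  set E : Matrix o m 𝕜 := (1 : Matrix o o 𝕜).submatrix id f
  set F : Matrix n l 𝕜 := (1 : Matrix n n 𝕜).submatrix id g
  have hcompress : M.submatrix f g = Eᴴ * M * F := by
    simp only [E, F, conjTranspose_submatrix, conjTranspose_one]
    ext a b
    simp [mul_apply, one_apply]
  have hE : ‖Eᴴ‖ ≤ 1 := (l2_opNorm_conjTranspose E).trans_le (l2_opNorm_one_submatrix_le_one hf)
  have hF : ‖F‖ ≤ 1 := l2_opNorm_one_submatrix_le_one hg
  calc ‖M.submatrix f g‖ ≤ ‖Eᴴ‖ * ‖M‖ * ‖F‖ := by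
        rw [hcompress]
        exact (l2_opNorm_mul _ _).trans (by gcongr; exact l2_opNorm_mul _ _)
    _ ≤ 1 * ‖M‖ * 1 := by gcongr
    _ = ‖M‖ := by rw [one_mul, mul_one]

theorem sqrt_offdiagonal_block_properties_general [Fintype k] [Fintype l] [Fintype m] [Fintype q]
    [DecidableEq l] [DecidableEq q] {R V : Matrix n n 𝕜} (hR : R.PosSemidef) (hV : Vᴴ * V = 1)
    {lam : n → ℝ} (hlam : ∀ i, 0 ≤ lam i)
    (hRR : R * R = V * diagonal (fun i => (lam i : 𝕜)) * Vᴴ) {c : ℝ} (hc : ∀ i, lam i ≤ c)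
    {f : m → n} (hf : Function.Injective f) {g : l → n} (hg : Function.Injective g)
    (hfg : Disjoint (Set.range f) (Set.range g))
    {e : k → n} (he : Function.Injective e) (hsupp : ∀ i ∉ Set.range f, ∀ j, V i (e j) = 0)
    {W : Matrix m q 𝕜} (hcard : Fintype.card m = Fintype.card k + Fintype.card q)
    (hW : Wᴴ * W = 1) (hperp : (V.submatrix f e)ᴴ * W = 0) :
    ‖R.submatrix f g‖ ≤ √c ∧
    (R.submatrix f g)ᴴ * V.submatrix f e = 0 ∧
    (R.submatrix f g).rank ≤ Fintype.card q ∧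
    ∀ v : l → 𝕜, R.submatrix f g *ᵥ v ∈ Submodule.span 𝕜 (Set.range W.col) := by
  classical
  have hRV : R * V = V * diagonal (fun i => (√(lam i) : 𝕜)) := by
    conv_lhs => rw [eq_mul_diagonal_sqrt_mul_conjTranspose_of_posSemidef hR hV hlam hRR]
    rw [Matrix.mul_assoc, hV, Matrix.mul_one]
  have hzero : (R.submatrix f g)ᴴ * V.submatrix f e = 0 :=
    conjTranspose_submatrix_mul_submatrix_eq_zero hR.isHermitian hRV hf hfg hsupp
  have hfactor : R.submatrix f g = W * (Wᴴ * R.submatrix f g) :=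
    eq_mul_conjTranspose_mul_of_conjTranspose_mul_eq_zero hcard
      (conjTranspose_mul_self_submatrix_of_support hV hf he hsupp) hW hperp hzero
  refine ⟨?_, hzero, ?_, fun v => ?_⟩
  · exact (l2_opNorm_submatrix_le R hf hg).trans
      (l2_opNorm_le_sqrt_of_mul_self_eq hR hV hlam hRR hc)
  · rw [hfactor]
    exact (rank_mul_le_left _ _).trans (rank_le_card_width _)
  · rw [hfactor, ← mulVec_mulVec, ← range_mulVecLin]
    exact LinearMap.mem_range_self W.mulVecLin _

end SquareRoot

/-- **Proposition (Properties of the matrix `(Σ^{1/2})_{JJᶜ}`).** -/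
theorem sqrt_offdiagonal_block_properties
    (p k s : ℕ) (hp : 0 < p) (hk : 0 < k) (hks : k ≤ s) (hsp : s ≤ p) (hkp : k < p)
    (S R : Matrix (Fin p) (Fin p) ℝ) (hSpsd : S.PosSemidef)
    (hR : R.PosSemidef) (hRS : R * R = S)
    (lam : Fin p → ℝ) (V : Matrix (Fin p) (Fin p) ℝ)
    (hV : Vᵀ * V = 1) (hSeig : S = V * Matrix.diagonal lam * Vᵀ)
    (hlam : Antitone lam) (hlam0 : ∀ i, 0 ≤ lam i)
    (U : Matrix (Fin p) (Fin k) ℝ) (hU : ∀ i j, U i j = V i (Fin.castLE (le_of_lt hkp) j))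
    (jmap : Fin s → Fin p) (hjmap : StrictMono jmap)
    (hsupp : ∀ i, (∀ a, i ≠ jmap a) → ∀ j, U i j = 0)
    (UJ : Matrix (Fin s) (Fin k) ℝ) (hUJ : UJ = U.submatrix jmap id)
    (jc : Fin (p - s) → Fin p) (hjc : StrictMono jc)
    (hdisj : ∀ a b, jmap a ≠ jc b)
    (hcover : ∀ i, (∃ a, i = jmap a) ∨ (∃ b, i = jc b))
    (Uperp : Matrix (Fin s) (Fin (s - k)) ℝ)
    (hUJorth : UJᵀ * UJ = 1) (hUperpOrth : Uperpᵀ * Uperp = 1)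
    (hperp : UJᵀ * Uperp = 0) :
    specNorm (R.submatrix jmap jc) ≤ 2 * Real.sqrt (lam ⟨0, hp⟩) ∧
    (R.submatrix jmap jc)ᵀ * UJ = 0 ∧
    (R.submatrix jmap jc).rank ≤ s - k ∧
    ∀ v : Fin (p - s) → ℝ, (R.submatrix jmap jc).mulVec v ∈
      Submodule.span ℝ (Set.range fun j : Fin (s - k) => fun i => Uperp i j) := by
  have hU' : U = V.submatrix id (Fin.castLE hkp.le) := by ext i j; exact hU i j
  subst hU' hUJ
  have hc : ∀ i, lam i ≤ lam ⟨0, hp⟩ := fun i => hlam (Fin.mk_le_of_le_val (Nat.zero_le i))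
  obtain ⟨hnorm, hzero, hrank, hspan⟩ := sqrt_offdiagonal_block_properties_general (𝕜 := ℝ)
    hR hV hlam0 (hRS.trans hSeig) hc hjmap.injective hjc.injective
    (Set.disjoint_range_iff.mpr hdisj) (Fin.castLE_injective hkp.le)
    (fun i hi => hsupp i fun a ha => hi ⟨a, ha.symm⟩)
    (by simp only [Fintype.card_fin]; omega) hUperpOrth hperp
  refine ⟨hnorm.trans ?_, hzero, hrank.trans_eq (Fintype.card_fin _), hspan⟩
  linarith [Real.sqrt_nonneg (lam ⟨0, hp⟩)]
end
end

section
/- (Procrustes alignment is quadratically close to U^T Ũ.) Let U and Ũ be p×k matrices with orthonormal columns and let W_* := argmin_{W ∈ O(k)} ‖Ũ − U W‖_F (given via the singular value decomposition of Uᵀ Ũ = W_1 D W_2ᵀ as W_* = W_1 W_2ᵀ). Then ‖W_* − Uᵀ Ũ‖ ≤ ‖U Uᵀ − Ũ Ũᵀ‖², where ‖·‖ is the spectral norm. -/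
/-!
Put `M = Uᴴ Ũ` and `H = Wᴴ M`. Expanding the Frobenius norm, minimality of `W` says that
`Re tr (Q H) ≤ Re tr H` for every unitary `Q`. The first variation along `Q = exp (t K)`, `K`
skew-adjoint, shows that `H` is Hermitian, and the reflections `Q = 1 - 2 P` across the eigenvectors
of `H` show that its eigenvalues are nonnegative. Thus `M = W H` is a polar decomposition, and no
singular value decomposition is needed.

Now `‖W - M‖ = ‖1 - H‖`, and `H² = Mᴴ M`, so the scalar inequality `|1 - x| ≤ |1 - x²|` for `x ≥ 0`
on the spectrum of `H` gives `‖1 - H‖ ≤ ‖1 - Mᴴ M‖`. Finally `1 - Mᴴ M = (Δ Ũ)ᴴ (Δ Ũ)` with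
`Δ = U Uᴴ - Ũ Ũᴴ`, which has norm at most `‖Δ‖²`.
-/

open MeasureTheory ProbabilityTheory Matrix

noncomputable section

open scoped ComplexOrder
open RCLike (re)

variable {m n 𝕜 : Type*} [Fintype m] [Fintype n] [RCLike 𝕜]

lemma isStarProjection_vecMulVec_star {R : Type*} [CommSemiring R] [StarRing R] {u : n → R}
    (hu : star u ⬝ᵥ u = 1) : IsStarProjection (vecMulVec u (star u)) where
  isIdempotentElem := by simp [IsIdempotentElem, vecMulVec_mul_vecMulVec, hu]
  isSelfAdjoint := by simp [IsSelfAdjoint, star_eq_conjTranspose, conjTranspose_vecMulVec]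

lemma re_trace_conjTranspose (A : Matrix n n 𝕜) : re Aᴴ.trace = re A.trace := by
  rw [trace_conjTranspose, ← starRingEnd_apply, RCLike.conj_re]

section Frobenius

open scoped Matrix.Norms.Frobenius

lemma frobNorm_eq_norm {p k : ℕ} (A : Matrix (Fin p) (Fin k) ℝ) : frobNorm A = ‖A‖ := by
  simp [frobNorm, frobenius_norm_def, Real.sqrt_eq_rpow]

lemma frobenius_norm_sq (A : Matrix m n 𝕜) : ‖A‖ ^ 2 = re (Aᴴ * A).trace := by
  rw [frobenius_norm_def, ← Real.sqrt_eq_rpow, Real.sq_sqrt (by positivity), Finset.sum_comm]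
  simp [trace, mul_apply, ← RCLike.normSq_eq_def', RCLike.conj_mul]

lemma frobenius_norm_sub_sq (A C : Matrix m n 𝕜) :
    ‖A - C‖ ^ 2 = ‖A‖ ^ 2 + ‖C‖ ^ 2 - 2 * re (Cᴴ * A).trace := by
  have cross : re (Aᴴ * C).trace = re (Cᴴ * A).trace := by
    rw [← re_trace_conjTranspose, conjTranspose_mul, conjTranspose_conjTranspose]
  simp only [frobenius_norm_sq, conjTranspose_sub, Matrix.sub_mul, Matrix.mul_sub, trace_sub,
    map_sub, cross]
  ring

variable [DecidableEq n]

lemma frobenius_norm_mul_unitary (B : Matrix m n 𝕜) {V : Matrix n n 𝕜}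
    (hV : V ∈ unitaryGroup n 𝕜) : ‖B * V‖ = ‖B‖ := by
  rw [← sq_eq_sq₀ (norm_nonneg _) (norm_nonneg _), frobenius_norm_sq, frobenius_norm_sq,
    conjTranspose_mul, ← Matrix.mul_assoc, trace_mul_comm, ← Matrix.mul_assoc, ← Matrix.mul_assoc,
    ← star_eq_conjTranspose V, mem_unitaryGroup_iff.mp hV, Matrix.one_mul]

/-- `W` solves the unitary Procrustes problem of aligning `B` to `A`: it minimizes the Frobenius
norm of `A - B * W` over the unitary group. Over `ℝ` this is the matrix `W_*` of orthogonal
Procrustes analysis, characterized by minimality because the minimizer need not be unique. -/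
structure IsProcrustesSolution (A B : Matrix m n 𝕜) (W : Matrix n n 𝕜) : Prop where
  mem_unitaryGroup : W ∈ unitaryGroup n 𝕜
  isMinOn : IsMinOn (fun V ↦ ‖A - B * V‖) (unitaryGroup n 𝕜) W

lemma isProcrustesSolution_iff_frobNorm_le {p k : ℕ} {A B : Matrix (Fin p) (Fin k) ℝ}
    {W : Matrix (Fin k) (Fin k) ℝ} :
    IsProcrustesSolution A B W ↔ Wᵀ * W = 1 ∧ ∀ V : Matrix (Fin k) (Fin k) ℝ, Vᵀ * V = 1 →
      frobNorm (A - B * W) ≤ frobNorm (A - B * V) := by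
  have hmem (V : Matrix (Fin k) (Fin k) ℝ) : V ∈ unitaryGroup (Fin k) ℝ ↔ Vᵀ * V = 1 :=
    mem_unitaryGroup_iff'
  have hmin : IsMinOn (fun V ↦ ‖A - B * V‖) (unitaryGroup (Fin k) ℝ) W ↔
      ∀ V : Matrix (Fin k) (Fin k) ℝ, Vᵀ * V = 1 →
        frobNorm (A - B * W) ≤ frobNorm (A - B * V) := by
    simp only [isMinOn_iff, SetLike.mem_coe, hmem, frobNorm_eq_norm]
  exact ⟨fun h ↦ ⟨(hmem W).mp h.mem_unitaryGroup, hmin.mp h.isMinOn⟩,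
    fun h ↦ ⟨(hmem W).mpr h.1, hmin.mpr h.2⟩⟩

lemma IsProcrustesSolution.re_trace_unitary_mul_le {A B : Matrix m n 𝕜} {W Q : Matrix n n 𝕜}
    (hW : IsProcrustesSolution A B W) (hQ : Q ∈ unitaryGroup n 𝕜) :
    re (Q * (Wᴴ * (Bᴴ * A))).trace ≤ re (Wᴴ * (Bᴴ * A)).trace := by
  have expand {V : Matrix n n 𝕜} (hV : V ∈ unitaryGroup n 𝕜) :
      ‖A - B * V‖ ^ 2 = ‖A‖ ^ 2 + ‖B‖ ^ 2 - 2 * re (Vᴴ * (Bᴴ * A)).trace := by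
    rw [frobenius_norm_sub_sq, frobenius_norm_mul_unitary B hV, conjTranspose_mul,
      Matrix.mul_assoc]
  have hV : W * Qᴴ ∈ unitaryGroup n 𝕜 := mul_mem hW.mem_unitaryGroup (Unitary.star_mem hQ)
  have hmin : ‖A - B * W‖ ^ 2 ≤ ‖A - B * (W * Qᴴ)‖ ^ 2 :=
    pow_le_pow_left₀ (norm_nonneg _) (hW.isMinOn hV) 2
  rw [expand hW.mem_unitaryGroup, expand hV, conjTranspose_mul, conjTranspose_conjTranspose,
    Matrix.mul_assoc] at hmin
  linarith

section TraceMaximality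

variable {H : Matrix n n 𝕜} (hH : ∀ Q ∈ unitaryGroup n 𝕜, re (Q * H).trace ≤ re H.trace)
include hH

lemma re_trace_mul_eq_zero_of_mem_skewAdjoint {K : Matrix n n 𝕜}
    (hK : K ∈ skewAdjoint (Matrix n n 𝕜)) : re (K * H).trace = 0 := by
  let reTrace : Matrix n n 𝕜 →L[ℝ] ℝ :=
    LinearMap.toContinuousLinearMap (RCLike.reLm ∘ₗ traceLinearMap n ℝ 𝕜)
  have hexp : HasDerivAt (fun t : ℝ ↦ NormedSpace.exp (t • K) * H) (K * H) 0 := by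
    have h := (hasDerivAt_exp_smul_const K (0 : ℝ)).mul_const H
    rw [zero_smul, NormedSpace.exp_zero, one_mul] at h
    exact h
  have hderiv : HasDerivAt (fun t : ℝ ↦ reTrace (NormedSpace.exp (t • K) * H))
      (reTrace (K * H)) 0 := reTrace.hasFDerivAt.comp_hasDerivAt 0 hexp
  have hmax : IsLocalMax (fun t : ℝ ↦ reTrace (NormedSpace.exp (t • K) * H)) 0 := by
    refine Filter.Eventually.of_forall fun t ↦ ?_
    have hQ : NormedSpace.exp (t • K) ∈ unitaryGroup n 𝕜 :=
      NormedSpace.exp_mem_unitary_of_mem_skewAdjoint (skewAdjoint.smul_mem t hK)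
    simpa [reTrace] using hH _ hQ
  exact hmax.hasDerivAt_eq_zero hderiv

lemma isHermitian_of_forall_re_trace_unitary_mul_le : H.IsHermitian := by
  have hskew : H - Hᴴ ∈ skewAdjoint (Matrix n n 𝕜) := by
    simp [skewAdjoint.mem_iff, star_eq_conjTranspose]
  have hvar : re ((H - Hᴴ) * H).trace = 0 := re_trace_mul_eq_zero_of_mem_skewAdjoint hH hskew
  have hvar' : re ((H - Hᴴ) * Hᴴ).trace = 0 := by
    rw [← re_trace_conjTranspose, conjTranspose_mul, trace_mul_comm, conjTranspose_sub,
      conjTranspose_conjTranspose, ← neg_sub, Matrix.neg_mul, trace_neg, map_neg, hvar, neg_zero]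
  have hnorm : ‖Hᴴ - H‖ ^ 2 = 0 := by
    rw [frobenius_norm_sq, conjTranspose_sub, conjTranspose_conjTranspose, Matrix.mul_sub,
      trace_sub, map_sub, hvar, hvar', sub_zero]
  exact sub_eq_zero.mp (norm_eq_zero.mp (pow_eq_zero_iff two_ne_zero |>.mp hnorm))

lemma re_trace_mul_nonneg_of_isStarProjection {P : Matrix n n 𝕜} (hP : IsStarProjection P) :
    0 ≤ re (P * H).trace := by
  have hrefl : 1 - 2 * P ∈ unitaryGroup n 𝕜 := by
    convert hP.one_sub.two_mul_sub_one_mem_unitary using 1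
    noncomm_ring
  have h := hH _ hrefl
  simp only [Matrix.sub_mul, Matrix.one_mul, two_mul, Matrix.add_mul, trace_sub, trace_add,
    map_sub, map_add] at h
  linarith

lemma posSemidef_of_forall_re_trace_unitary_mul_le : H.PosSemidef := by
  have hherm := isHermitian_of_forall_re_trace_unitary_mul_le hH
  refine hherm.posSemidef_iff_eigenvalues_nonneg.mpr fun i ↦ ?_
  have hunit : star (hherm.eigenvectorBasis i : n → 𝕜) ⬝ᵥ hherm.eigenvectorBasis i = 1 := by
    rw [dotProduct_comm, ← EuclideanSpace.inner_eq_star_dotProduct]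
    simp
  have h := re_trace_mul_nonneg_of_isStarProjection hH
    (isStarProjection_vecMulVec_star hunit)
  rwa [vecMulVec_mul, trace_vecMulVec, dotProduct_comm, ← dotProduct_mulVec,
    ← hherm.eigenvalues_eq] at h

end TraceMaximality

lemma IsProcrustesSolution.posSemidef {A B : Matrix m n 𝕜} {W : Matrix n n 𝕜}
    (hW : IsProcrustesSolution A B W) : (Wᴴ * (Bᴴ * A)).PosSemidef :=
  posSemidef_of_forall_re_trace_unitary_mul_le fun _ ↦ hW.re_trace_unitary_mul_le

end Frobenius

section Spectral

open scoped Matrix.Norms.L2Operator MatrixOrder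

lemma norm_one_sub_le_norm_one_sub_mul_self {A : Type*} [NormedRing A] [StarRing A]
    [NormedAlgebra ℝ A] [IsometricContinuousFunctionalCalculus ℝ A IsSelfAdjoint]
    [PartialOrder A] [StarOrderedRing A] [NonnegSpectrumClass ℝ A] {a : A} (ha : 0 ≤ a) :
    ‖1 - a‖ ≤ ‖1 - a * a‖ := by
  have hsa : IsSelfAdjoint a := .of_nonneg ha
  have hcfc : 1 - a = cfc (fun x : ℝ ↦ 1 - x) a := by
    rw [cfc_sub .., cfc_const_one .., cfc_id' ..]
  have hcfc_sq : 1 - a * a = cfc (fun x : ℝ ↦ 1 - x * x) a := by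
    rw [cfc_sub .., cfc_const_one .., cfc_mul .., cfc_id' ..]
  rw [hcfc, hcfc_sq]
  refine norm_cfc_le (norm_nonneg _) fun x hx ↦ ?_
  have hx0 : 0 ≤ x := spectrum_nonneg_of_nonneg ha hx
  have hx1 : 1 ≤ ‖1 + x‖ := (le_add_of_nonneg_right hx0).trans (le_abs_self _)
  calc ‖1 - x‖ ≤ ‖1 + x‖ * ‖1 - x‖ := le_mul_of_one_le_left (norm_nonneg _) hx1
    _ = ‖1 - x * x‖ := by rw [← norm_mul]; ring_nf
    _ ≤ ‖cfc (fun x : ℝ ↦ 1 - x * x) a‖ := norm_apply_le_norm_cfc (fun x : ℝ ↦ 1 - x * x) a hx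

lemma specNorm_eq_norm {p k : ℕ} (A : Matrix (Fin p) (Fin k) ℝ) : specNorm A = ‖A‖ := rfl

variable [DecidableEq n]

lemma norm_one_sub_le_norm_one_sub_mul_self_of_posSemidef {H : Matrix n n 𝕜}
    (hH : H.PosSemidef) : ‖1 - H‖ ≤ ‖1 - H * H‖ :=
  -- Restricting scalars from `𝕜` would replace the `ℝ`-algebra structure used by the calculus.
  letI : NormedAlgebra ℝ (Matrix n n 𝕜) :=
    { norm_smul_le r A := by
        rw [RCLike.real_smul_eq_coe_smul (K := 𝕜), norm_smul, RCLike.norm_ofReal,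
          Real.norm_eq_abs] }
  norm_one_sub_le_norm_one_sub_mul_self hH.nonneg

lemma norm_le_one_of_conjTranspose_mul_self_eq_one {A : Matrix m n 𝕜} (hA : Aᴴ * A = 1) :
    ‖A‖ ≤ 1 := by
  rw [← pow_le_one_iff_of_nonneg (norm_nonneg A) two_ne_zero, sq,
    ← l2_opNorm_conjTranspose_mul_self, hA]
  exact IsStarProjection.norm_le _ (.one _)

variable {l : Type*} [Fintype l] [DecidableEq l]

lemma one_sub_conjTranspose_mul_self_crossGram {U : Matrix m l 𝕜} {Ut : Matrix m n 𝕜}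
    (hU : Uᴴ * U = 1) (hUt : Utᴴ * Ut = 1) :
    1 - (Uᴴ * Ut)ᴴ * (Uᴴ * Ut) =
      ((U * Uᴴ - Ut * Utᴴ) * Ut)ᴴ * ((U * Uᴴ - Ut * Utᴴ) * Ut) := by
  have hres : (U * Uᴴ - Ut * Utᴴ) * Ut = U * (Uᴴ * Ut) - Ut := by
    rw [Matrix.sub_mul, Matrix.mul_assoc, Matrix.mul_assoc, hUt, Matrix.mul_one]
  have hcancel : Uᴴ * (U * (Uᴴ * Ut)) = Uᴴ * Ut := by
    rw [← Matrix.mul_assoc, hU, Matrix.one_mul]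
  rw [hres]
  simp only [conjTranspose_sub, conjTranspose_mul, conjTranspose_conjTranspose, Matrix.sub_mul,
    Matrix.mul_sub, Matrix.mul_assoc, hcancel, hUt]
  abel

variable [DecidableEq m]

/-- The eigenvalues of `1 - (Uᴴ * Ut)ᴴ * (Uᴴ * Ut)` are the `sin² θ_j` of the principal angles
between the column spaces; this is where the square in the Procrustes bound comes from. -/
lemma norm_one_sub_conjTranspose_mul_self_crossGram_le {U : Matrix m l 𝕜} {Ut : Matrix m n 𝕜}
    (hU : Uᴴ * U = 1) (hUt : Utᴴ * Ut = 1) :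
    ‖1 - (Uᴴ * Ut)ᴴ * (Uᴴ * Ut)‖ ≤ ‖U * Uᴴ - Ut * Utᴴ‖ ^ 2 := by
  rw [one_sub_conjTranspose_mul_self_crossGram hU hUt, l2_opNorm_conjTranspose_mul_self, ← sq]
  gcongr
  exact (l2_opNorm_mul _ _).trans <| mul_le_of_le_one_right (norm_nonneg _) <|
    norm_le_one_of_conjTranspose_mul_self_eq_one hUt

theorem procrustes_quadratically_close_general {U Ut : Matrix m n 𝕜} {W : Matrix n n 𝕜}
    (hU : Uᴴ * U = 1) (hUt : Utᴴ * Ut = 1) (hW : IsProcrustesSolution Ut U W) :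
    ‖W - Uᴴ * Ut‖ ≤ ‖U * Uᴴ - Ut * Utᴴ‖ ^ 2 := by
  set H := Wᴴ * (Uᴴ * Ut) with hH
  have hpsd : H.PosSemidef := hW.posSemidef
  have hWW : W * Wᴴ = 1 := mem_unitaryGroup_iff.mp hW.mem_unitaryGroup
  have hpolar : W * H = Uᴴ * Ut := by rw [hH, ← Matrix.mul_assoc, hWW, Matrix.one_mul]
  have hsq : H * H = (Uᴴ * Ut)ᴴ * (Uᴴ * Ut) := by
    nth_rw 1 [← hpsd.isHermitian, hH, conjTranspose_mul, conjTranspose_conjTranspose,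
      Matrix.mul_assoc, hpolar]
  calc ‖W - Uᴴ * Ut‖ = ‖W * (1 - H)‖ := by rw [Matrix.mul_sub, Matrix.mul_one, hpolar]
    _ = ‖1 - H‖ := CStarRing.norm_mem_unitary_mul _ hW.mem_unitaryGroup
    _ ≤ ‖1 - H * H‖ := norm_one_sub_le_norm_one_sub_mul_self_of_posSemidef hpsd
    _ = ‖1 - (Uᴴ * Ut)ᴴ * (Uᴴ * Ut)‖ := by rw [hsq]
    _ ≤ ‖U * Uᴴ - Ut * Utᴴ‖ ^ 2 := norm_one_sub_conjTranspose_mul_self_crossGram_le hU hUt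

end Spectral

/-- **(Procrustes alignment is quadratically close to `Uᵀ Ũ`.)** -/
theorem procrustes_quadratically_close
    (p k : ℕ) (U Ut : Matrix (Fin p) (Fin k) ℝ)
    (hUorth : Uᵀ * U = 1) (hUtorth : Utᵀ * Ut = 1)
    (W : Matrix (Fin k) (Fin k) ℝ) (hWorth : Wᵀ * W = 1)
    (hWmin : ∀ W' : Matrix (Fin k) (Fin k) ℝ, W'ᵀ * W' = 1 →
      frobNorm (Ut - U * W) ≤ frobNorm (Ut - U * W')) :
    specNorm (W - Uᵀ * Ut) ≤ specNorm (U * Uᵀ - Ut * Utᵀ) ^ 2 := by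
  exact procrustes_quadratically_close_general hUorth hUtorth
    (isProcrustesSolution_iff_frobNorm_le.mpr ⟨hWorth, hWmin⟩)
end
end
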